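/- For all coprime integers a, b with 3 ≤ a ≤ 15 and b ≥ 181, the number π*(a,b) of primes not representable as au + bv with u, v nonnegative integers satisfies π*(a,b) > 0.05334 · π(S(a,b)), where S(a,b) = ab − a − b and π(x) is the number of primes not exceeding x. -/

import Mathlib

/-- `piStar a b` is the number of primes not representable as `a*u + b*v`
with `u, v` nonnegative integers, i.e. the number of primes not in the
numerical semigroup `⟨a, b⟩`. -/
noncomputable def piStar (a b : ℕ) : ℕ :=
  Set.ncard {p : ℕ | p.Prime ∧ ¬ ∃ u v : ℕ, p = a * u + b * v}

/-- `S a b = a*b - a - b` (the Frobenius-type quantity). -/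
def S (a b : ℕ) : ℕ := a * b - a - b

open Chebyshev in
lemma aux_logfact (n : ℕ) :
    Real.log (n.factorial) = ∑ d ∈ Finset.Ioc 0 n, ArithmeticFunction.vonMangoldt d * ((n / d : ℕ) : ℝ) := by
  rw [← ArithmeticFunction.sum_Ioc_mul_zeta_eq_sum]
  rw [ArithmeticFunction.vonMangoldt_mul_zeta]
  induction n with
  | zero => simp
  | succ k ih =>
    rw [Finset.sum_Ioc_succ_top (Nat.zero_le k), ← ih, Nat.factorial_succ]
    push_cast
    rw [Real.log_mul (by positivity) (by positivity), ArithmeticFunction.log_apply]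
    push_cast
    ring

/-- Same sum, extended to a longer range. -/
lemma aux_logfact_div (n k : ℕ) :
    Real.log ((n / k).factorial) =
      ∑ d ∈ Finset.Ioc 0 n, ArithmeticFunction.vonMangoldt d * ((n / d / k : ℕ) : ℝ) := by
  rw [aux_logfact]
  have hs : Finset.Ioc 0 (n / k) ⊆ Finset.Ioc 0 n :=
    Finset.Ioc_subset_Ioc_right (Nat.div_le_self n k)
  rw [← Finset.sum_subset hs]
  · refine Finset.sum_congr rfl fun d _ => ?_
    rw [Nat.div_div_eq_div_mul, Nat.div_div_eq_div_mul, mul_comm k d]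
  · intro d hd hd'
    simp only [Finset.mem_Ioc, not_and, not_le] at hd hd'
    have : n / d / k = 0 := by
      rw [Nat.div_div_eq_div_mul, mul_comm, ← Nat.div_div_eq_div_mul]
      exact Nat.div_eq_of_lt (hd' hd.1)
    simp [this]

noncomputable def chebF (n : ℕ) : ℝ :=
  Real.log (n.factorial) - Real.log ((n / 2).factorial) - Real.log ((n / 3).factorial)
    - Real.log ((n / 5).factorial) + Real.log ((n / 30).factorial)

lemma chebF_eq (n : ℕ) : chebF n = ∑ d ∈ Finset.Ioc 0 n, ArithmeticFunction.vonMangoldt d *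
    (((n / d : ℕ) : ℝ) - ((n / d / 2 : ℕ) : ℝ) - ((n / d / 3 : ℕ) : ℝ) - ((n / d / 5 : ℕ) : ℝ)
      + ((n / d / 30 : ℕ) : ℝ)) := by
  rw [chebF, aux_logfact_div n 2, aux_logfact_div n 3, aux_logfact_div n 5, aux_logfact_div n 30,
    aux_logfact n]
  simp only [mul_add, mul_sub, Finset.sum_add_distrib, Finset.sum_sub_distrib]

lemma chebF_le_psi (n : ℕ) : chebF n ≤ Chebyshev.psi n := by
  rw [chebF_eq, Chebyshev.psi, Nat.floor_natCast]
  refine Finset.sum_le_sum fun d _ => ?_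
  have h : n / d + n / d / 30 ≤ 1 + n / d / 2 + n / d / 3 + n / d / 5 := by omega
  have h' : ((n / d : ℕ) : ℝ) + ((n / d / 30 : ℕ) : ℝ) ≤
    1 + ((n / d / 2 : ℕ) : ℝ) + ((n / d / 3 : ℕ) : ℝ) + ((n / d / 5 : ℕ) : ℝ) := by exact_mod_cast h
  have h0 : 0 ≤ ArithmeticFunction.vonMangoldt d := ArithmeticFunction.vonMangoldt_nonneg
  nlinarith

lemma theta_sub_le_chebF (n : ℕ) :
    Chebyshev.theta n ≤ Chebyshev.theta ((n / 6 : ℕ) : ℝ) + chebF n := by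
  rw [chebF_eq, Chebyshev.theta, Chebyshev.theta, Nat.floor_natCast, Nat.floor_natCast]
  rw [Finset.sum_filter, Finset.sum_filter]
  have hs : Finset.Ioc 0 (n / 6) ⊆ Finset.Ioc 0 n :=
    Finset.Ioc_subset_Ioc_right (Nat.div_le_self n 6)
  have e : ∑ p ∈ Finset.Ioc 0 (n / 6), (if p.Prime then Real.log p else 0) =
      ∑ p ∈ Finset.Ioc 0 n, (if p ≤ n / 6 then (if p.Prime then Real.log p else 0) else 0) := by
    rw [← Finset.sum_filter (fun p => p ≤ n / 6)]
    refine Finset.sum_congr ?_ fun _ _ => rfl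
    ext p
    simp only [Finset.mem_Ioc, Finset.mem_filter]
    have := Nat.div_le_self n 6
    omega
  rw [e, ← Finset.sum_add_distrib]
  refine Finset.sum_le_sum fun d hd => ?_
  simp only [Finset.mem_Ioc] at hd
  have h0 : 0 ≤ ArithmeticFunction.vonMangoldt d := ArithmeticFunction.vonMangoldt_nonneg
  have h : n / d / 2 + n / d / 3 + n / d / 5 ≤ n / d + n / d / 30 := by omega
  have h' : ((n / d / 2 : ℕ) : ℝ) + ((n / d / 3 : ℕ) : ℝ) + ((n / d / 5 : ℕ) : ℝ)
    ≤ ((n / d : ℕ) : ℝ) + ((n / d / 30 : ℕ) : ℝ) := by exact_mod_cast h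
  by_cases hdn : d ≤ n / 6
  · rw [if_pos hdn]
    have := mul_nonneg h0 (sub_nonneg.2 h')
    nlinarith
  · rw [if_neg hdn]
    have h1 : 1 ≤ n / d := (Nat.one_le_div_iff hd.1).2 hd.2
    have h6 : n / d < 6 := by
      rw [Nat.div_lt_iff_lt_mul hd.1]
      omega
    have h2 : n / d / 2 + n / d / 3 + n / d / 5 + 1 = n / d + n / d / 30 := by omega
    have h2' : ((n / d / 2 : ℕ) : ℝ) + ((n / d / 3 : ℕ) : ℝ) + ((n / d / 5 : ℕ) : ℝ) + 1
      = ((n / d : ℕ) : ℝ) + ((n / d / 30 : ℕ) : ℝ) := by exact_mod_cast h2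
    have h3 : ((n / d : ℕ) : ℝ) - ((n / d / 2 : ℕ) : ℝ) - ((n / d / 3 : ℕ) : ℝ)
      - ((n / d / 5 : ℕ) : ℝ) + ((n / d / 30 : ℕ) : ℝ) = 1 := by linarith
    rw [h3, zero_add, mul_one]
    split_ifs with hp
    · rw [ArithmeticFunction.vonMangoldt_apply_prime hp]
    · exact h0

lemma logfact_bounds (n : ℕ) (hn : 1 ≤ n) :
    n * Real.log n - n + 1 ≤ Real.log n.factorial ∧
    Real.log n.factorial ≤ n * Real.log n - n + 1 + Real.log n := by
  induction n, hn using Nat.le_induction with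
  | base => simp
  | succ n hn ih =>
    have hn0 : (0 : ℝ) < n := by exact_mod_cast hn
    rw [Nat.factorial_succ]
    push_cast
    rw [Real.log_mul (by positivity) (by positivity)]
    have h1 : Real.log (n + 1) - Real.log n ≤ 1 / n := by
      rw [← Real.log_div (by positivity) (by positivity)]
      have := Real.log_le_sub_one_of_pos (x := ((n : ℝ) + 1) / n) (by positivity)
      have e : ((n : ℝ) + 1) / n - 1 = 1 / n := by field_simp; ring
      linarith
    have h2 : 1 / ((n : ℝ) + 1) ≤ Real.log (n + 1) - Real.log n := by
      rw [← Real.log_div (by positivity) (by positivity)]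
      have := Real.one_sub_inv_le_log_of_pos (x := ((n : ℝ) + 1) / n) (by positivity)
      have e : 1 - (((n : ℝ) + 1) / n)⁻¹ = 1 / (n + 1) := by field_simp; ring
      linarith
    have h1' : n * (Real.log (n + 1) - Real.log n) ≤ 1 := by
      calc _ ≤ n * (1 / (n : ℝ)) := by gcongr
        _ = 1 := by field_simp
    have h2' : 1 ≤ (n + 1) * (Real.log (n + 1) - Real.log n) := by
      calc (1 : ℝ) = (n + 1) * (1 / ((n : ℝ) + 1)) := by field_simp
        _ ≤ _ := by gcongr
    constructor <;> nlinarith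

/-- Version for `n / k`. -/
lemma logfact_div_bounds (n k : ℕ) (hk : 1 ≤ k) (hn : k ≤ n) :
    (n / k : ℝ) * (Real.log n - Real.log k) - n / k + 1 - (Real.log n - Real.log k)
      ≤ Real.log (n / k).factorial ∧
    Real.log (n / k).factorial ≤
      (n / k : ℝ) * (Real.log n - Real.log k) - n / k + 1 + (Real.log n - Real.log k) := by
  have hk0 : (0 : ℝ) < k := by exact_mod_cast hk
  have hn0 : (0 : ℝ) < n := by exact_mod_cast (by omega : 0 < n)
  rw [← Real.log_div (by positivity) (by positivity)]
  set x : ℝ := n / k with hx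
  set m := n / k with hm
  have hm1 : 1 ≤ m := (Nat.one_le_div_iff (by omega)).2 hn
  have hm0 : (1 : ℝ) ≤ m := by exact_mod_cast hm1
  have hmx : (m : ℝ) ≤ x := Nat.cast_div_le
  have hxm : x ≤ m + 1 := by
    rw [hx, div_le_iff₀ hk0]
    have := Nat.lt_div_mul_add (a := n) (b := k) (by omega)
    rw [← hm] at this
    have h2 : n ≤ (m + 1) * k := by rw [add_mul, one_mul]; omega
    exact_mod_cast h2
  obtain ⟨h1, h2⟩ := logfact_bounds m hm1
  have hl0 : 0 ≤ Real.log m := Real.log_nonneg hm0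
  have hl : Real.log m ≤ Real.log x := Real.log_le_log (by linarith) hmx
  have hd : m * (Real.log x - Real.log m) ≤ x - m := by
    rw [← Real.log_div (by linarith) (by linarith)]
    have := Real.log_le_sub_one_of_pos (x := x / m) (div_pos (by linarith) (by linarith))
    calc _ ≤ m * (x / m - 1) := by gcongr
      _ = x - m := by field_simp
  have hd' : x - m ≤ x * (Real.log x - Real.log m) := by
    have hx0 : 0 < x := by linarith
    rw [← Real.log_div (by linarith) (by linarith)]
    have := Real.one_sub_inv_le_log_of_pos (x := x / m) (by positivity)
    calc x - m = x * (1 - (x / m)⁻¹) := by field_simp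
      _ ≤ _ := by gcongr
  constructor
  · nlinarith
  · nlinarith

lemma chebF_bounds (n : ℕ) (hn : 30 ≤ n) :
    0.9212 * (n : ℝ) - 4 * Real.log n + 5.8 ≤ chebF n ∧
    chebF n ≤ 0.9213 * (n : ℝ) + 5 * Real.log n - 7.8 := by
  obtain ⟨a1, a2⟩ := logfact_bounds n (by omega)
  obtain ⟨b1, b2⟩ := logfact_div_bounds n 2 (by omega) (by omega)
  obtain ⟨c1, c2⟩ := logfact_div_bounds n 3 (by omega) (by omega)
  obtain ⟨d1, d2⟩ := logfact_div_bounds n 5 (by omega) (by omega)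
  obtain ⟨e1, e2⟩ := logfact_div_bounds n 30 (by omega) (by omega)
  have h30 : Real.log (30 : ℕ) = Real.log 2 + Real.log 3 + Real.log 5 := by
    rw [← Real.log_mul (by norm_num) (by norm_num), ← Real.log_mul (by norm_num) (by norm_num)]
    norm_num
  rw [h30] at e1 e2
  push_cast at *
  have hn0 : (0 : ℝ) < n := by exact_mod_cast (by omega : 0 < n)
  have l2 := Real.log_two_gt_d9
  have l2' := Real.log_two_lt_d9
  have l3 := Real.log_three_gt_d9
  have l3' := Real.log_three_lt_d9
  have l5 := Real.log_five_gt_d9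
  have l5' := Real.log_five_lt_d9
  have m2 := mul_le_mul_of_nonneg_left l2.le hn0.le
  have m2' := mul_le_mul_of_nonneg_left l2'.le hn0.le
  have m3 := mul_le_mul_of_nonneg_left l3.le hn0.le
  have m3' := mul_le_mul_of_nonneg_left l3'.le hn0.le
  have m5 := mul_le_mul_of_nonneg_left l5.le hn0.le
  have m5' := mul_le_mul_of_nonneg_left l5'.le hn0.le
  unfold chebF
  constructor
  · ring_nf at *
    linarith
  · ring_nf at *
    linarith

lemma log_tangent (x c : ℝ) (hx : 0 < x) (hc : 0 < c) :
    Real.log x ≤ Real.log c + x / c - 1 := by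
  have := Real.log_le_sub_one_of_pos (x := x / c) (by positivity)
  rw [Real.log_div hx.ne' hc.ne'] at this
  linarith

lemma theta_bound (n : ℕ) : Chebyshev.theta n ≤ 1.13 * (n : ℝ) + 420 := by
  induction n using Nat.strong_induction_on with
  | _ n ih =>
    have l2 := Real.log_two_gt_d9
    have l2' := Real.log_two_lt_d9
    have l5' := Real.log_five_lt_d9
    have hn0 : (0 : ℝ) ≤ n := by positivity
    rcases le_or_gt n 1600 with h | h
    · have h1 := Chebyshev.theta_le_log4_mul_x hn0
      have h4 : Real.log 4 = 2 * Real.log 2 := by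
        rw [show (4 : ℝ) = 2 ^ 2 by norm_num, Real.log_pow]; norm_num
      rw [h4] at h1
      have : (n : ℝ) ≤ 1600 := by exact_mod_cast h
      nlinarith
    · have h1 := theta_sub_le_chebF n
      have h2 := (chebF_bounds n (by omega)).2
      have h3 := ih (n / 6) (by omega)
      have h6 : ((n / 6 : ℕ) : ℝ) ≤ n / 6 := Nat.cast_div_le
      have hn : (1600 : ℝ) < n := by exact_mod_cast h
      have ht := log_tangent n 1600 (by linarith) (by norm_num)
      have e : Real.log 1600 = 6 * Real.log 2 + 2 * Real.log 5 := by
        rw [show (1600 : ℝ) = 2 ^ 6 * 5 ^ 2 by norm_num,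
          Real.log_mul (by norm_num) (by norm_num), Real.log_pow, Real.log_pow]; norm_num
      rw [e] at ht
      linarith

lemma pi_sub_le (b N : ℕ) (hb : 1 ≤ b) :
    ((Nat.primeCounting N : ℝ) - Nat.primeCounting b) * Real.log b ≤ Chebyshev.theta N := by
  have hl : 0 ≤ Real.log b := Real.log_natCast_nonneg b
  rw [Chebyshev.theta_eq_sum_primesLE_log]
  have hc : ((Nat.primeCounting N : ℝ) - Nat.primeCounting b) ≤
      ((Nat.primesLE N \ Nat.primesLE b).card : ℝ) := by
    have h1 := Finset.le_card_sdiff (Nat.primesLE b) (Nat.primesLE N)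
    rw [Nat.primesLE_card_eq_primeCounting, Nat.primesLE_card_eq_primeCounting] at h1
    have h2 : Nat.primeCounting N ≤
      (Nat.primesLE N \ Nat.primesLE b).card + Nat.primeCounting b := by omega
    have h3 : (Nat.primeCounting N : ℝ) ≤
      ((Nat.primesLE N \ Nat.primesLE b).card : ℝ) + Nat.primeCounting b := by exact_mod_cast h2
    linarith
  calc _ ≤ ((Nat.primesLE N \ Nat.primesLE b).card : ℝ) * Real.log b := by gcongr
    _ = ∑ p ∈ Nat.primesLE N \ Nat.primesLE b, Real.log b := by simp
    _ ≤ ∑ p ∈ Nat.primesLE N \ Nat.primesLE b, Real.log p := by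
        refine Finset.sum_le_sum fun p hp => ?_
        simp only [Finset.mem_sdiff, Nat.mem_primesLE, not_and] at hp
        have hbp : b ≤ p := by
          by_contra hlt
          exact hp.2 (by omega) hp.1.2
        exact Real.log_le_log (by exact_mod_cast hb) (by exact_mod_cast hbp)
    _ ≤ _ := by
        refine Finset.sum_le_sum_of_subset_of_nonneg Finset.sdiff_subset fun p _ _ => ?_
        exact Real.log_natCast_nonneg p

lemma tail (b : ℕ) (hb : 3500 ≤ b) :
    (0.05334 : ℝ) * (Nat.primeCounting (14 * b) : ℝ) < Nat.primeCounting b - 2 := by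
  have h1 := pi_sub_le b (14 * b) (by omega)
  have h2 := theta_bound (14 * b)
  have h3 := (chebF_bounds b (by omega)).1
  have h4 := (chebF_le_psi b).trans (Chebyshev.psi_le_primeCounting_mul_log b)
  have hb' : (3500 : ℝ) ≤ b := by exact_mod_cast hb
  have hl : 0 < Real.log b := Real.log_pos (by linarith)
  have l2' := Real.log_two_lt_d9
  have l5' := Real.log_five_lt_d9
  have ht := log_tangent b 4000 (by linarith) (by norm_num)
  have e : Real.log 4000 = 5 * Real.log 2 + 3 * Real.log 5 := by
    rw [show (4000 : ℝ) = 2 ^ 5 * 5 ^ 3 by norm_num,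
      Real.log_mul (by norm_num) (by norm_num), Real.log_pow, Real.log_pow]; norm_num
  rw [e] at ht
  refine lt_of_mul_lt_mul_right ?_ hl.le
  push_cast at h1 h2
  nlinarith

/-- The primorial of 61. -/
def PP : ℕ := 117288381359406970983270

def cnt : ℕ → ℕ → ℕ → ℕ
  | 0, lo, len => len * (1 - (Nat.gcd lo PP - 1))
  | k + 1, lo, len => cnt k lo (len / 2) + cnt k (lo + len / 2) (len - len / 2)

lemma cnt_eq (k : ℕ) : ∀ lo len, len ≤ 2 ^ k →
    cnt k lo len = ((Finset.Ico lo (lo + len)).filter (fun n => Nat.gcd n PP = 1)).card := by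
  induction k with
  | zero =>
    intro lo len h
    have : len = 0 ∨ len = 1 := by omega
    rcases this with rfl | rfl
    · simp [cnt]
    · simp only [cnt, Nat.Ico_succ_singleton, Finset.filter_singleton]
      have hpos : 0 < Nat.gcd lo PP := Nat.gcd_pos_of_pos_right _ (by norm_num [PP])
      split_ifs with hg
      · simp [hg]
      · simp only [Finset.card_empty]
        omega
  | succ k ih =>
    intro lo len h
    rw [pow_succ] at h
    rw [cnt, ih _ _ (by omega), ih _ _ (by omega), ← Finset.card_union_of_disjoint,
      ← Finset.filter_union, Finset.Ico_union_Ico_eq_Ico (by omega) (by omega)]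
    · congr 3; omega
    · exact Finset.disjoint_filter_filter (Finset.Ico_disjoint_Ico_consecutive _ _ _)

lemma pp_dvd (p : ℕ) (hp : p.Prime) (h : p ≤ 66) : p ∣ PP := by
  unfold PP
  interval_cases p <;> revert hp <;> norm_num

lemma pp_fac : PP = 2 * 3 * 5 * 7 * 11 * 13 * 17 * 19 * 23 * 29 * 31 * 37 * 41 * 43 * 47 * 53 * 59 * 61 := by
  norm_num [PP]

lemma pp_cop (p : ℕ) (hp : p.Prime) (h : 62 ≤ p) : Nat.gcd p PP = 1 := by
  have key : ∀ q : ℕ, q.Prime → q ≤ 61 → Nat.Coprime p q := fun q hq hq' =>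
    (Nat.coprime_primes hp hq).2 (by omega)
  change Nat.Coprime p PP
  rw [pp_fac]
  repeat' apply Nat.Coprime.mul_right
  all_goals exact key _ (by norm_num) (by norm_num)

lemma pp_prime (n : ℕ) (h : 62 ≤ n) (h' : n < 4489) (hg : Nat.gcd n PP = 1) : n.Prime := by
  by_contra hn
  have h1 := Nat.minFac_sq_le_self (by omega) hn
  have h2 : n.minFac ≤ 66 := by nlinarith
  have h3 := pp_dvd _ (Nat.minFac_prime (by omega)) h2
  have h4 := Nat.dvd_gcd (Nat.minFac_dvd n) h3
  rw [hg] at h4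
  exact (Nat.minFac_prime (n := n) (by omega)).one_lt.ne' (Nat.dvd_one.1 h4)

lemma pi'_split (m : ℕ) : Nat.primeCounting' (62 + m) =
    18 + ((Finset.Ico 62 (62 + m)).filter Nat.Prime).card := by
  have e : ((Finset.Ico 0 62).filter Nat.Prime).card = 18 := by decide +kernel
  rw [Nat.primeCounting', Nat.count_eq_card_filter_range, ← e, Finset.range_eq_Ico,
    ← Finset.card_union_of_disjoint, ← Finset.filter_union,
    Finset.Ico_union_Ico_eq_Ico (by omega) (by omega)]
  exact Finset.disjoint_filter_filter (Finset.Ico_disjoint_Ico_consecutive _ _ _)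

lemma pi'_le (k m : ℕ) (h : m ≤ 2 ^ k) : Nat.primeCounting' (62 + m) ≤ 18 + cnt k 62 m := by
  rw [pi'_split, cnt_eq k 62 m h]
  gcongr 18 + ?_
  refine Finset.card_le_card fun p hp => ?_
  simp only [Finset.mem_filter, Finset.mem_Ico] at hp ⊢
  exact ⟨hp.1, pp_cop p hp.2 hp.1.1⟩

lemma le_pi' (k m : ℕ) (h : m ≤ 2 ^ k) (hm : 62 + m ≤ 4489) :
    18 + cnt k 62 m ≤ Nat.primeCounting' (62 + m) := by
  rw [pi'_split, cnt_eq k 62 m h]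
  gcongr 18 + ?_
  refine Finset.card_le_card fun p hp => ?_
  simp only [Finset.mem_filter, Finset.mem_Ico] at hp ⊢
  exact ⟨hp.1, pp_prime p hp.1.1 (by omega) hp.2⟩

lemma seg (lo hi A B b : ℕ) (k1 k2 : ℕ) (h1 : lo ≤ b) (h2 : b ≤ hi) (hlo : 62 ≤ lo) 
    (hlo' : lo ≤ 4489) (hA : lo - 62 ≤ 2 ^ k1) (hB : 14 * hi + 1 - 62 ≤ 2 ^ k2)
    (cA : A ≤ 18 + cnt k1 62 (lo - 62)) (cB : 18 + cnt k2 62 (14 * hi + 1 - 62) ≤ B)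
    (hAB : 5334 * B < 100000 * (A - 1)) :
    (0.05334 : ℝ) * (Nat.primeCounting (14 * b) : ℝ) < Nat.primeCounting' b - 1 := by
  have a1 := le_pi' k1 (lo - 62) hA (by omega)
  have b1 := pi'_le k2 (14 * hi + 1 - 62) hB
  rw [show 62 + (lo - 62) = lo by omega] at a1
  rw [show 62 + (14 * hi + 1 - 62) = 14 * hi + 1 by omega] at b1
  have a2 : Nat.primeCounting' lo ≤ Nat.primeCounting' b := Nat.monotone_primeCounting' h1
  have b2 : Nat.primeCounting (14 * b) ≤ Nat.primeCounting' (14 * hi + 1) :=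
    Nat.monotone_primeCounting' (by omega)
  have f : 5334 * Nat.primeCounting (14 * b) + 100000 < 100000 * Nat.primeCounting' b := by omega
  have f' : (5334 : ℝ) * Nat.primeCounting (14 * b) + 100000 < 100000 * Nat.primeCounting' b := by
    exact_mod_cast f
  linarith

lemma main_ineq (b : ℕ) (hb : 181 ≤ b) :
    (0.05334 : ℝ) * (Nat.primeCounting (14 * b) : ℝ) < Nat.primeCounting' b - 1 := by
  rcases le_or_gt 3500 b with h | h
  · have := tail b h
    have h2 : Nat.primeCounting b ≤ Nat.primeCounting' b + 1 := by
      rw [Nat.primeCounting, Nat.primeCounting', Nat.count_succ]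
      split_ifs <;> omega
    have h3 : (Nat.primeCounting b : ℝ) ≤ Nat.primeCounting' b + 1 := by exact_mod_cast h2
    linarith
  rcases le_or_gt b 390 with h1 | h1
  · exact seg 181 390 41 749 b 7 13 hb h1 (by norm_num) (by norm_num) (by norm_num) (by norm_num)
      (by decide +kernel) (by decide +kernel) (by norm_num)
  rcases le_or_gt b 700 with h2 | h2
  · exact seg 391 700 77 1424 b 9 14 h1 h2 (by norm_num) (by norm_num) (by norm_num) (by norm_num)
      (by decide +kernel) (by decide +kernel) (by norm_num)
  rcases le_or_gt b 1140 with h3 | h3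
  · exact seg 701 1140 125 2324 b 10 14 h2 h3 (by norm_num) (by norm_num) (by norm_num)
      (by norm_num) (by decide +kernel) (by decide +kernel) (by norm_num)
  rcases le_or_gt b 1900 with h4 | h4
  · exact seg 1141 1900 189 3500 b 11 15 h3 h4 (by norm_num) (by norm_num) (by norm_num)
      (by norm_num) (by decide +kernel) (by decide +kernel) (by norm_num)
  rcases le_or_gt b 2890 with h5 | h5
  · exact seg 1901 2890 290 5400 b 11 16 h4 h5 (by norm_num) (by norm_num) (by norm_num)
      (by norm_num) (by decide +kernel) (by decide +kernel) (by norm_num)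
  · exact seg 2891 3500 418 7700 b 12 16 h5 h.le (by norm_num) (by norm_num) (by norm_num)
      (by norm_num) (by decide +kernel) (by decide +kernel) (by norm_num)

lemma piStar_ge (a b : ℕ) (ha : 3 ≤ a) (hb : 181 ≤ b) (h : Nat.Coprime a b) :
    Nat.primeCounting' b ≤ piStar a b + 1 := by
  have hfin : {p : ℕ | p.Prime ∧ ¬ ∃ u v : ℕ, p = a * u + b * v}.Finite := by
    refine (Set.finite_Iio (a * b)).subset fun p hp => ?_
    simp only [Set.mem_ofPred_eq, Set.mem_Iio] at hp ⊢
    by_contra hlt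
    refine hp.2 ?_
    obtain ⟨u, v, huv⟩ := Nat.exists_add_mul_eq_of_gcd_dvd_of_mul_pred_le a b p
      (by rw [h]; exact one_dvd _)
      (le_trans (Nat.mul_le_mul (Nat.pred_le a) (Nat.pred_le b)) (not_lt.1 hlt))
    exact ⟨u, v, by rw [← huv]; ring⟩
  have hsub : (((Nat.primesBelow b).erase a : Finset ℕ) : Set ℕ) ⊆
      {p : ℕ | p.Prime ∧ ¬ ∃ u v : ℕ, p = a * u + b * v} := by
    intro p hp
    simp only [Finset.coe_erase, Set.mem_sdiff, Finset.mem_coe, Nat.mem_primesBelow,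
      Set.mem_singleton_iff] at hp
    refine ⟨hp.1.2, ?_⟩
    rintro ⟨u, v, huv⟩
    rcases Nat.eq_zero_or_pos v with rfl | hv
    · have hd : a ∣ p := ⟨u, by simpa using huv⟩
      rcases (Nat.dvd_prime hp.1.2).1 hd with h1 | h1
      · omega
      · exact hp.2 h1.symm
    · have : b ≤ b * v := Nat.le_mul_of_pos_right b hv
      omega
  have h1 := Set.ncard_le_ncard hsub hfin
  rw [Set.ncard_coe_finset] at h1
  have h2 := Finset.pred_card_le_card_erase (s := Nat.primesBelow b) (a := a)
  rw [Nat.primesBelow_card_eq_primeCounting'] at h2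
  unfold piStar
  omega

theorem piStar_gt_case4 (a b : ℕ) (ha : 3 ≤ a) (ha' : a ≤ 15) (hb : 181 ≤ b)
    (h : Nat.Coprime a b) :
    (0.05334 : ℝ) * (Nat.primeCounting (S a b) : ℝ) < (piStar a b : ℝ) := by
  have h1 := main_ineq b hb
  have h2 := piStar_ge a b ha hb h
  have h3 : Nat.primeCounting (S a b) ≤ Nat.primeCounting (14 * b) := by
    apply Nat.monotone_primeCounting
    unfold S
    have : a * b ≤ 15 * b := Nat.mul_le_mul_right b ha'
    omega
  have h2' : (Nat.primeCounting' b : ℝ) ≤ piStar a b + 1 := by exact_mod_cast h2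
  have h3' : (Nat.primeCounting (S a b) : ℝ) ≤ Nat.primeCounting (14 * b) := by exact_mod_cast h3
  linarith
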